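/- arXiv:1503.04641 — 4 statements merged into one kernel-verified Lean document; each statement's English description precedes it below -/
import Mathlib

section
/- Let λ₁ < λ₂ be real numbers with λ₁ > 0, let f(t) = λ₁ + (λ₂ − λ₁)·(2·arctan t + π)/(2π), and define the spiral curve σ : ℝ → ℝ² by σ(t) = (f(t)·cos t, f(t)·sin t). Then σ is injective; that is, the spiralling asymptotic boundary curve is an embedded (non-self-intersecting) curve. -/
/-!
The squared distance from `σ t` to the origin is `f t ^ 2`, so the point `σ t` determines `f t`
because `f` is positive (`arctan > -π / 2`). Since `f` is an affine function of `arctan` with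
nonzero slope, it is injective, and `f t` determines `t`.
-/

open Real

/-- For `0 < λ₁ < λ₂`, the spiral
`σ t = (f t * cos t, f t * sin t)` in the Euclidean plane, where
`f t = λ₁ + (λ₂ − λ₁) * (2 * arctan t + π) / (2 * π)`, is an injective
(non-self-intersecting) curve. -/
theorem spiral_injective (lam1 lam2 : ℝ) (h1 : 0 < lam1) (hlt : lam1 < lam2)
    (f : ℝ → ℝ)
    (hf : ∀ t : ℝ, f t = lam1 + (lam2 - lam1) * (2 * Real.arctan t + π) / (2 * π))
    (σ : ℝ → EuclideanSpace ℝ (Fin 2))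
    (hσ : ∀ t : ℝ, σ t = ![f t * Real.cos t, f t * Real.sin t]) :
    Function.Injective σ := by
  have hpos : ∀ t, 0 < f t := by
    intro t
    rw [hf]
    have ha : 0 < 2 * Real.arctan t + π := by linarith [Real.neg_pi_div_two_lt_arctan t]
    have hd : 0 < lam2 - lam1 := sub_pos.2 hlt
    have hpi := Real.pi_pos
    positivity
  intro s t hst
  have hv : ![f s * Real.cos s, f s * Real.sin s] = ![f t * Real.cos t, f t * Real.sin t] := by
    rw [← hσ, ← hσ, hst]
  have hx : f s * Real.cos s = f t * Real.cos t := congrFun hv 0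
  have hy : f s * Real.sin s = f t * Real.sin t := congrFun hv 1
  have hsq : f s ^ 2 = f t ^ 2 := by
    calc f s ^ 2 = (f s * Real.cos s) ^ 2 + (f s * Real.sin s) ^ 2 := by
          linear_combination -f s ^ 2 * Real.sin_sq_add_cos_sq s
      _ = (f t * Real.cos t) ^ 2 + (f t * Real.sin t) ^ 2 := by rw [hx, hy]
      _ = f t ^ 2 := by linear_combination f t ^ 2 * Real.sin_sq_add_cos_sq t
  have hfe : f s = f t := (pow_left_inj₀ (hpos s).le (hpos t).le two_ne_zero).1 hsq
  rw [hf, hf] at hfe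
  have hmul := (div_left_inj' Real.two_pi_pos.ne').1 (add_left_cancel hfe)
  have harc := mul_left_cancel₀ (sub_pos.2 hlt).ne' hmul
  exact Real.arctan_injective (by linarith)
end

section
/- Let λ₁ < λ₂ be real numbers with λ₁ > 0, let f(t) = λ₁ + (λ₂ − λ₁)·(2·arctan t + π)/(2π), let σ(t) = (f(t)·cos t, f(t)·sin t), and let A = {x ∈ ℝ² : λ₁ < ‖x‖ < λ₂} be the open annulus. Then σ, viewed as a map from ℝ into A, is a closed topological embedding: it is injective, continuous, a homeomorphism onto its image, and its image σ(ℝ) is a closed subset of A. In particular the spiral is properly embedded in the open annulus A. -/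
/-!
The norm `‖σ t‖ = f t` is an increasing function of `arctan t`, so the parameter `t` can be read
off from the point: `g x = tan (π (‖x‖ - λ₁) / (λ₂ - λ₁) - π / 2)` is continuous on the open
annulus, where the argument of `tan` stays in `(-π / 2, π / 2)`, and `g (σ t) = t`. A continuous
map into a Hausdorff space with a continuous left inverse is a closed embedding, which gives every
claim about `σ` as a map into the annulus.
-/

open Real Set

/-- For `0 < λ₁ < λ₂`, the spiral `σ t = (f t * cos t, f t * sin t)`,
with `f t = λ₁ + (λ₂ − λ₁) * (2 * arctan t + π) / (2 * π)`, viewed as a map into the open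
annulus `A = {x : λ₁ < ‖x‖ < λ₂}` of the Euclidean plane, is a closed topological
embedding: it maps into `A`, is injective, continuous, a homeomorphism onto its image,
and its image is a closed subset of `A` (with the subspace topology). Hence the spiral
is properly embedded in `A`. -/
theorem spiral_closedEmbedding_in_annulus (lam1 lam2 : ℝ) (h1 : 0 < lam1)
    (hlt : lam1 < lam2)
    (f : ℝ → ℝ)
    (hf : ∀ t : ℝ, f t = lam1 + (lam2 - lam1) * (2 * Real.arctan t + π) / (2 * π))
    (σ : ℝ → EuclideanSpace ℝ (Fin 2))
    (hσ : ∀ t : ℝ, σ t = ![f t * Real.cos t, f t * Real.sin t])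
    (A : Set (EuclideanSpace ℝ (Fin 2)))
    (hA : A = {x : EuclideanSpace ℝ (Fin 2) | lam1 < ‖x‖ ∧ ‖x‖ < lam2}) :
    (∀ t : ℝ, σ t ∈ A) ∧
      Function.Injective σ ∧
      Continuous σ ∧
      Topology.IsEmbedding σ ∧
      IsClosed ((Subtype.val : A → EuclideanSpace ℝ (Fin 2)) ⁻¹' Set.range σ) := by
  have hπ := Real.pi_pos
  have hd : 0 < lam2 - lam1 := sub_pos.2 hlt
  have hfl : ∀ t, lam1 < f t := fun t => by
    have := Real.neg_pi_div_two_lt_arctan t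
    have : 0 < (lam2 - lam1) * (2 * Real.arctan t + π) / (2 * π) :=
      div_pos (mul_pos hd (by linarith)) (by linarith)
    rw [hf]; linarith
  have hfu : ∀ t, f t < lam2 := fun t => by
    have := Real.arctan_lt_pi_div_two t
    have : (lam2 - lam1) * (2 * Real.arctan t + π) / (2 * π) < lam2 - lam1 := by
      rw [div_lt_iff₀ (by linarith)]
      exact mul_lt_mul_of_pos_left (by linarith) hd
    rw [hf]; linarith
  have hnorm : ∀ t, ‖σ t‖ = f t := fun t => by
    have hsq : (f t * Real.cos t) ^ 2 + (f t * Real.sin t) ^ 2 = f t ^ 2 := by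
      linear_combination f t ^ 2 * Real.sin_sq_add_cos_sq t
    rw [EuclideanSpace.norm_eq, Fin.sum_univ_two, hσ t]
    simp only [Matrix.cons_val_zero, Matrix.cons_val_one, Real.norm_eq_abs, sq_abs]
    rw [hsq, Real.sqrt_sq (h1.trans (hfl t)).le]
  have hmem : ∀ t, σ t ∈ A := fun t => by
    rw [hA]
    exact ⟨(hnorm t).symm ▸ hfl t, (hnorm t).symm ▸ hfu t⟩
  have hfc : Continuous f := by
    rw [funext hf]
    fun_prop
  have hcont : Continuous σ := by
    have hσ' : σ = fun t => WithLp.toLp 2 ![f t * Real.cos t, f t * Real.sin t] := by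
      funext t
      rw [← hσ t]
    rw [hσ']
    refine (PiLp.continuous_toLp 2 _).comp (continuous_pi fun i => ?_)
    fin_cases i
    · exact hfc.mul Real.continuous_cos
    · exact hfc.mul Real.continuous_sin
  let τ : ℝ → A := fun t => ⟨σ t, hmem t⟩
  let g : A → ℝ := fun x => Real.tan (π * (‖x.1‖ - lam1) / (lam2 - lam1) - π / 2)
  have hτ : Continuous τ := hcont.subtype_mk hmem
  have hg : Continuous g := by
    refine Real.continuousOn_tan_Ioo.comp_continuous (by fun_prop) fun x => ?_
    obtain ⟨hx1, hx2⟩ : lam1 < ‖x.1‖ ∧ ‖x.1‖ < lam2 := hA.subset x.2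
    have hpos : 0 < π * (‖x.1‖ - lam1) / (lam2 - lam1) :=
      div_pos (mul_pos hπ (by linarith)) hd
    have hlt' : π * (‖x.1‖ - lam1) / (lam2 - lam1) < π := by
      rw [div_lt_iff₀ hd]
      exact mul_lt_mul_of_pos_left (by linarith) hπ
    constructor <;> linarith
  have hinv : Function.LeftInverse g τ := fun t => by
    have harg : π * (‖σ t‖ - lam1) / (lam2 - lam1) - π / 2 = Real.arctan t := by
      rw [hnorm, hf]
      have := hd.ne'
      field_simp
      ring
    change Real.tan (π * (‖σ t‖ - lam1) / (lam2 - lam1) - π / 2) = t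
    rw [harg, Real.tan_arctan]
  have hclosed : Topology.IsClosedEmbedding τ := hinv.isClosedEmbedding hg hτ
  have hemb : Topology.IsEmbedding σ := Topology.IsEmbedding.subtypeVal.comp hclosed.isEmbedding
  refine ⟨hmem, hemb.injective, hcont, hemb, ?_⟩
  have hrange : (Subtype.val : A → EuclideanSpace ℝ (Fin 2)) ⁻¹' Set.range σ = Set.range τ := by
    ext x
    exact exists_congr fun t => (Subtype.ext_iff (a1 := τ t) (a2 := x)).symm
  rw [hrange]
  exact hclosed.isClosed_range
end

section
/- Let λ₁ < λ₂ be real numbers with λ₁ > 0, let f(t) = λ₁ + (λ₂ − λ₁)·(2·arctan t + π)/(2π), and let σ(t) = (f(t)·cos t, f(t)·sin t). Let C₁ and C₂ denote the circles in ℝ² of radius λ₁ and λ₂ centered at the origin. Then the closure of σ(ℝ) in ℝ² equals σ(ℝ) ∪ C₁ ∪ C₂, and the three sets σ(ℝ), C₁, C₂ are pairwise disjoint. In particular σ(ℝ) is not a closed subset of ℝ² (the spiral is a non-proper curve in the plane whose closure decomposes into three disjoint leaves). -/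
open Real Set

/-!
Since `‖σ t‖ = f t`, everything is read off from the radius. The profile `f` is continuous,
takes values strictly between `lam1` and `lam2`, and tends to `lam1` at `-∞` and to `lam2` at `+∞`;
this gives the disjointness claims. A point of either circle with polar angle `θ` is the limit of
`σ (θ + 2πn)` as `n → ∞` or of `σ (θ - 2πn)`, so both circles lie in the closure
(`mem_closure_spiral`).

Conversely, a closure point has norm in `[lam1, lam2]`. If the norm is strictly between the two,
the parameter can be recovered continuously from the radius: with
`g r = tan (π (r - lam1) / (lam2 - lam1) - π / 2)` one has `g (f t) = t`, hence
`y ↦ σ (g ‖y‖)` is continuous near the point and is the identity on the spiral, so it fixes the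
point, which therefore lies on the spiral (`mem_range_of_mem_closure`). The spiral is not closed
because its closure contains the nonempty circle `C1`, which it does not meet.
-/

open Filter Topology

lemma exists_polar (x : EuclideanSpace ℝ (Fin 2)) :
    ∃ θ : ℝ, x = !₂[‖x‖ * cos θ, ‖x‖ * sin θ] := by
  have hn : ‖(⟨x 0, x 1⟩ : ℂ)‖ = ‖x‖ := by
    rw [EuclideanSpace.norm_eq, Complex.norm_eq_sqrt_sq_add_sq]
    simp [Fin.sum_univ_two]
  refine ⟨Complex.arg ⟨x 0, x 1⟩, ?_⟩
  ext i
  fin_cases i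
  · simp [← hn, Complex.norm_mul_cos_arg]
  · simp [← hn, Complex.norm_mul_sin_arg]

lemma norm_polar {r : ℝ} (hr : 0 ≤ r) (t : ℝ) :
    ‖(!₂[r * cos t, r * sin t] : EuclideanSpace ℝ (Fin 2))‖ = r := by
  rw [EuclideanSpace.norm_eq]
  have : (r * cos t) ^ 2 + (r * sin t) ^ 2 = r ^ 2 := by
    linear_combination r ^ 2 * sin_sq_add_cos_sq t
  simp [Fin.sum_univ_two, this, sqrt_sq hr]

lemma continuous_polar :
    Continuous fun p : ℝ × ℝ =>
      (!₂[p.1 * cos p.2, p.1 * sin p.2] : EuclideanSpace ℝ (Fin 2)) := by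
  refine (PiLp.continuous_toLp 2 _).comp (continuous_pi fun i => ?_)
  fin_cases i
  · exact continuous_fst.mul (continuous_cos.comp continuous_snd)
  · exact continuous_fst.mul (continuous_sin.comp continuous_snd)

/-- A spiral whose radius tends to `‖x‖` along every sequence `θ + 2πk(n)`, for some fixed integer
sequence `k`, accumulates at `x`: such times share the polar angle of `x`. -/
lemma mem_closure_spiral {f : ℝ → ℝ} {σ : ℝ → EuclideanSpace ℝ (Fin 2)}
    (hσ : ∀ t, σ t = !₂[f t * cos t, f t * sin t]) (x : EuclideanSpace ℝ (Fin 2)) (k : ℕ → ℤ)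
    (hk : ∀ θ : ℝ, Tendsto (fun n => f (θ + k n * (2 * π))) atTop (𝓝 ‖x‖)) :
    x ∈ closure (range σ) := by
  obtain ⟨θ, hθ⟩ := exists_polar x
  have hlim : Tendsto (fun n => σ (θ + k n * (2 * π))) atTop (𝓝 x) := by
    have := (continuous_polar.tendsto (‖x‖, θ)).comp ((hk θ).prodMk_nhds tendsto_const_nhds)
    rw [← hθ] at this
    refine this.congr fun n => ?_
    simp [hσ, cos_add_int_mul_two_pi, sin_add_int_mul_two_pi]
  exact mem_closure_of_tendsto hlim (Eventually.of_forall fun n => mem_range_self _)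

/-- If the radius `‖σ t‖` determines the parameter through a function `g` continuous at `‖x‖`,
then a closure point `x` already lies on the curve, namely at parameter `g ‖x‖`. -/
lemma mem_range_of_mem_closure {E : Type*} [NormedAddCommGroup E] {σ : ℝ → E}
    (hσ : Continuous σ) {g : ℝ → ℝ} (hg : ∀ t, g ‖σ t‖ = t) {x : E}
    (hx : x ∈ closure (range σ)) (hgx : ContinuousAt g ‖x‖) : x ∈ range σ := by
  obtain ⟨u, hu, hlim⟩ := mem_closure_iff_seq_limit.1 hx
  have h : Tendsto (fun n => σ (g ‖u n‖)) atTop (𝓝 (σ (g ‖x‖))) :=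
    (hσ.tendsto _).comp (hgx.tendsto.comp hlim.norm)
  have he : (fun n => σ (g ‖u n‖)) = u := by
    funext n
    obtain ⟨t, ht⟩ := hu n
    rw [← ht, hg]
  rw [he] at h
  exact ⟨_, tendsto_nhds_unique h hlim⟩

/-- For `0 < λ₁ < λ₂`, let `σ` be the spiral
`σ t = (f t * cos t, f t * sin t)` with
`f t = λ₁ + (λ₂ − λ₁) * (2 * arctan t + π) / (2 * π)`, and let `C₁`, `C₂` be the circles
of radius `λ₁`, `λ₂` centered at the origin of the Euclidean plane. Then the closure of
the spiral equals `σ(ℝ) ∪ C₁ ∪ C₂`, the three sets `σ(ℝ)`, `C₁`, `C₂` are pairwise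
disjoint, and `σ(ℝ)` is not closed in the plane. -/
theorem spiral_closure_three_leaves (lam1 lam2 : ℝ) (h1 : 0 < lam1) (hlt : lam1 < lam2)
    (f : ℝ → ℝ)
    (hf : ∀ t : ℝ, f t = lam1 + (lam2 - lam1) * (2 * Real.arctan t + π) / (2 * π))
    (σ : ℝ → EuclideanSpace ℝ (Fin 2))
    (hσ : ∀ t : ℝ, σ t = ![f t * Real.cos t, f t * Real.sin t])
    (C1 C2 : Set (EuclideanSpace ℝ (Fin 2)))
    (hC1 : C1 = {x : EuclideanSpace ℝ (Fin 2) | ‖x‖ = lam1})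
    (hC2 : C2 = {x : EuclideanSpace ℝ (Fin 2) | ‖x‖ = lam2}) :
    closure (Set.range σ) = Set.range σ ∪ C1 ∪ C2 ∧
      Disjoint (Set.range σ) C1 ∧
      Disjoint (Set.range σ) C2 ∧
      Disjoint C1 C2 ∧
      ¬ IsClosed (Set.range σ) := by
  have hπ : 0 < π := pi_pos
  have hd : 0 < lam2 - lam1 := sub_pos.2 hlt
  have hσ' : ∀ t, σ t = !₂[f t * cos t, f t * sin t] := fun t => by
    ext i
    simp [hσ t]
  have hfe : f = fun t => lam1 + (lam2 - lam1) * (2 * Real.arctan t + π) / (2 * π) := funext hf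
  have hfc : Continuous f := by
    rw [hfe]
    have := continuous_arctan
    fun_prop
  have hf1 : ∀ t, lam1 < f t := fun t => by
    have : 0 < 2 * arctan t + π := by linarith [neg_pi_div_two_lt_arctan t]
    rw [hf]
    have : 0 < (lam2 - lam1) * (2 * arctan t + π) / (2 * π) := by positivity
    linarith
  have hf2 : ∀ t, f t < lam2 := fun t => by
    have : 2 * arctan t + π < 2 * π := by linarith [arctan_lt_pi_div_two t]
    have : (lam2 - lam1) * (2 * arctan t + π) / (2 * π) < lam2 - lam1 := by
      rw [div_lt_iff₀ (by positivity)]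
      gcongr
    rw [hf]
    linarith
  have hnorm : ∀ t, ‖σ t‖ = f t := fun t => by
    rw [hσ', norm_polar (h1.trans (hf1 t)).le]
  have hσc : Continuous σ := by
    rw [funext hσ']
    exact continuous_polar.comp (hfc.prodMk continuous_id)
  have htop : Tendsto f atTop (𝓝 lam2) := by
    have h := (((tendsto_arctan_atTop.mono_right nhdsWithin_le_nhds).const_mul 2).add_const π
      |>.const_mul (lam2 - lam1) |>.div_const (2 * π)).const_add lam1
    rw [hfe]
    convert h using 2
    field_simp
    ring
  have hbot : Tendsto f atBot (𝓝 lam1) := by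
    have h := (((tendsto_arctan_atBot.mono_right nhdsWithin_le_nhds).const_mul 2).add_const π
      |>.const_mul (lam2 - lam1) |>.div_const (2 * π)).const_add lam1
    rw [hfe]
    convert h using 2
    field_simp
    ring
  have hnat : Tendsto (fun n : ℕ => (n : ℝ) * (2 * π)) atTop atTop :=
    tendsto_natCast_atTop_atTop.atTop_mul_const (by positivity)
  have hsub1 : C1 ⊆ closure (range σ) := by
    rintro x hx
    rw [hC1, mem_ofPred_eq] at hx
    refine mem_closure_spiral hσ' x (fun n => -(n : ℤ)) fun θ => ?_
    rw [hx]
    refine hbot.comp (tendsto_atBot_add_const_left _ θ ?_)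
    simpa using hnat
  have hsub2 : C2 ⊆ closure (range σ) := by
    rintro x hx
    rw [hC2, mem_ofPred_eq] at hx
    refine mem_closure_spiral hσ' x (fun n => (n : ℤ)) fun θ => ?_
    rw [hx]
    refine htop.comp (tendsto_atTop_add_const_left _ θ ?_)
    simpa using hnat
  have hdis1 : Disjoint (range σ) C1 := by
    rw [Set.disjoint_left]
    rintro _ ⟨t, rfl⟩ ht
    rw [hC1, mem_ofPred_eq, hnorm] at ht
    exact (hf1 t).ne' ht
  have hdis2 : Disjoint (range σ) C2 := by
    rw [Set.disjoint_left]
    rintro _ ⟨t, rfl⟩ ht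
    rw [hC2, mem_ofPred_eq, hnorm] at ht
    exact (hf2 t).ne ht
  refine ⟨Subset.antisymm ?_ ?_, hdis1, hdis2, ?_, ?_⟩
  · intro x hx
    have hIcc : ‖x‖ ∈ Icc lam1 lam2 := by
      have hcl : IsClosed {y : EuclideanSpace ℝ (Fin 2) | ‖y‖ ∈ Icc lam1 lam2} :=
        isClosed_Icc.preimage continuous_norm
      refine closure_minimal ?_ hcl hx
      rintro _ ⟨t, rfl⟩
      rw [mem_ofPred_eq, hnorm]
      exact ⟨(hf1 t).le, (hf2 t).le⟩
    rcases hIcc.1.eq_or_lt with h | hl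
    · exact Or.inl (Or.inr (by rw [hC1]; exact h.symm))
    rcases hIcc.2.eq_or_lt with h | hr
    · exact Or.inr (by rw [hC2]; exact h)
    refine Or.inl (Or.inl (mem_range_of_mem_closure hσc
      (g := fun r => tan (π * (r - lam1) / (lam2 - lam1) - π / 2)) (fun t => ?_) hx ?_))
    · have : π * (f t - lam1) / (lam2 - lam1) - π / 2 = arctan t := by
        rw [hf]
        field_simp
        ring
      rw [hnorm]
      simp only [this, tan_arctan]
    · have hpos : 0 < π * (‖x‖ - lam1) / (lam2 - lam1) :=
        div_pos (mul_pos hπ (sub_pos.2 hl)) hd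
      have hlt' : π * (‖x‖ - lam1) / (lam2 - lam1) < π := by
        rw [div_lt_iff₀ hd]
        gcongr
      have hcos : cos (π * (‖x‖ - lam1) / (lam2 - lam1) - π / 2) ≠ 0 :=
        (cos_pos_of_mem_Ioo ⟨by linarith, by linarith⟩).ne'
      exact ContinuousAt.comp (f := fun r => π * (r - lam1) / (lam2 - lam1) - π / 2)
        (continuousAt_tan.2 hcos) (by fun_prop)
  · exact union_subset (union_subset subset_closure hsub1) hsub2
  · rw [Set.disjoint_left]
    intro x hx hx'
    rw [hC1, mem_ofPred_eq] at hx
    rw [hC2, mem_ofPred_eq] at hx'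
    linarith
  · intro hcl
    have hp : (!₂[lam1 * cos 0, lam1 * sin 0] : EuclideanSpace ℝ (Fin 2)) ∈ C1 := by
      rw [hC1]
      exact norm_polar h1.le 0
    have hp' := hsub1 hp
    rw [hcl.closure_eq] at hp'
    exact Set.disjoint_left.1 hdis1 hp' hp
end

section
/- Let λ₁ < λ₂ be real numbers with λ₁ > 0, let f(t) = λ₁ + (λ₂ − λ₁)·(2·arctan t + π)/(2π), and let A = {x ∈ ℝ² : λ₁ < ‖x‖ < λ₂} be the open annulus. For α ∈ ℝ let σ_α : ℝ → ℝ² be the rotated spiral σ_α(t) = (f(t)·cos(t + α), f(t)·sin(t + α)). Then the images σ_α(ℝ) for α ∈ [0, 2π) are pairwise disjoint and their union is all of A; equivalently, for every p ∈ A there exist a unique α ∈ [0, 2π) and a unique t ∈ ℝ with p = σ_α(t). Thus the rotated spirals foliate (partition) the open annulus A. -/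
/-!
The profile function is a strictly increasing bijection from `ℝ` onto `(λ₁, λ₂)`, and the point
`σ_α(t)` has polar coordinates `(f t, t + α)`. Hence the norm of a point of the annulus determines
`t`, after which its polar angle determines `α` modulo `2π`, so `α` itself in `[0, 2π)`.
`norm_eq_of_polar` gives the norm, `exists_profile_eq` the surjectivity of the profile,
`exists_polar` the existence of the angle and `eq_of_cos_sin_eq` its uniqueness.
-/

open Real Set

lemma norm_eq_of_polar {p : EuclideanSpace ℝ (Fin 2)} {r θ : ℝ} (hr : 0 ≤ r)
    (h0 : p 0 = r * Real.cos θ) (h1 : p 1 = r * Real.sin θ) : ‖p‖ = r := by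
  rw [EuclideanSpace.norm_eq, Fin.sum_univ_two, h0, h1]
  simp only [Real.norm_eq_abs, sq_abs]
  rw [show (r * Real.cos θ) ^ 2 + (r * Real.sin θ) ^ 2
      = r ^ 2 * (Real.sin θ ^ 2 + Real.cos θ ^ 2) by ring, Real.sin_sq_add_cos_sq, mul_one,
    Real.sqrt_sq hr]

lemma exists_polar_s8 (p : EuclideanSpace ℝ (Fin 2)) :
    ∃ θ : ℝ, p 0 = ‖p‖ * Real.cos θ ∧ p 1 = ‖p‖ * Real.sin θ := by
  have hn : ‖(⟨p 0, p 1⟩ : ℂ)‖ = ‖p‖ := by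
    rw [EuclideanSpace.norm_eq, Fin.sum_univ_two, Complex.norm_eq_sqrt_sq_add_sq]
    simp only [Real.norm_eq_abs, sq_abs]
  refine ⟨Complex.arg ⟨p 0, p 1⟩, ?_, ?_⟩
  · rw [← hn, Complex.norm_mul_cos_arg]
  · rw [← hn, Complex.norm_mul_sin_arg]

lemma eq_of_cos_sin_eq {t α β : ℝ} (hα : α ∈ Set.Ico (0 : ℝ) (2 * π))
    (hβ : β ∈ Set.Ico (0 : ℝ) (2 * π)) (hc : Real.cos (t + α) = Real.cos (t + β))
    (hs : Real.sin (t + α) = Real.sin (t + β)) : α = β := by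
  obtain ⟨k, hk⟩ := Real.Angle.angle_eq_iff_two_pi_dvd_sub.mp (Real.Angle.cos_sin_inj hc hs)
  have hpi := Real.pi_pos
  have hk1 : (k : ℝ) < 1 := by nlinarith [hα.1, hα.2, hβ.1, hβ.2]
  have hk2 : (-1 : ℝ) < k := by nlinarith [hα.1, hα.2, hβ.1, hβ.2]
  have hk0 : k = 0 := by
    have a : k < 1 := by exact_mod_cast hk1
    have b : -1 < k := by exact_mod_cast hk2
    omega
  rw [hk0] at hk
  simp only [Int.cast_zero, mul_zero] at hk
  linarith

lemma profile_mem {lam1 lam2 : ℝ} (hlt : lam1 < lam2) (t : ℝ) :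
    lam1 + (lam2 - lam1) * (2 * Real.arctan t + π) / (2 * π) ∈ Set.Ioo lam1 lam2 := by
  have hpi := Real.pi_pos
  have hd : 0 < lam2 - lam1 := sub_pos.mpr hlt
  have ha := Real.neg_pi_div_two_lt_arctan t
  have hb := Real.arctan_lt_pi_div_two t
  constructor
  · have : 0 < (lam2 - lam1) * (2 * Real.arctan t + π) / (2 * π) :=
      div_pos (mul_pos hd (by linarith)) (by linarith)
    linarith
  · have : (lam2 - lam1) * (2 * Real.arctan t + π) / (2 * π) < lam2 - lam1 := by
      rw [div_lt_iff₀ (by linarith)]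
      exact mul_lt_mul_of_pos_left (by linarith) hd
    linarith

lemma profile_injective {lam1 lam2 : ℝ} (hlt : lam1 < lam2) {s t : ℝ}
    (h : lam1 + (lam2 - lam1) * (2 * Real.arctan s + π) / (2 * π)
      = lam1 + (lam2 - lam1) * (2 * Real.arctan t + π) / (2 * π)) : s = t := by
  have hpi : (2 * π) ≠ 0 := by positivity
  have hd : lam2 - lam1 ≠ 0 := (sub_pos.mpr hlt).ne'
  have h' := mul_left_cancel₀ hd ((div_left_inj' hpi).mp (add_left_cancel h))
  exact Real.arctan_injective (by linarith)

lemma exists_profile_eq {lam1 lam2 r : ℝ} (hr : r ∈ Set.Ioo lam1 lam2) :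
    ∃ t : ℝ, lam1 + (lam2 - lam1) * (2 * Real.arctan t + π) / (2 * π) = r := by
  have hpi := Real.pi_pos
  have hd : 0 < lam2 - lam1 := by linarith [hr.1, hr.2]
  have hu0 : 0 < (r - lam1) / (lam2 - lam1) := div_pos (by linarith [hr.1]) hd
  have hu1 : (r - lam1) / (lam2 - lam1) < 1 := by
    rw [div_lt_one hd]
    linarith [hr.2]
  refine ⟨Real.tan ((r - lam1) / (lam2 - lam1) * π - π / 2), ?_⟩
  rw [Real.arctan_tan (by nlinarith) (by nlinarith)]
  field_simp
  ring

/-- For `0 < λ₁ < λ₂`, with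
`f t = λ₁ + (λ₂ − λ₁) * (2 * arctan t + π) / (2 * π)` and the rotated spirals
`σ_α t = (f t * cos (t + α), f t * sin (t + α))`, the images `σ_α(ℝ)` for
`α ∈ [0, 2π)` are pairwise disjoint and their union is the whole open annulus
`A = {x : λ₁ < ‖x‖ < λ₂}`; equivalently, every `p ∈ A` is `σ_α(t)` for a unique pair
`(α, t)` with `α ∈ [0, 2π)`. Thus the rotated spirals partition (foliate) `A`. -/
theorem rotated_spirals_foliate_annulus (lam1 lam2 : ℝ) (h1 : 0 < lam1)
    (hlt : lam1 < lam2)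
    (f : ℝ → ℝ)
    (hf : ∀ t : ℝ, f t = lam1 + (lam2 - lam1) * (2 * Real.arctan t + π) / (2 * π))
    (σ : ℝ → ℝ → EuclideanSpace ℝ (Fin 2))
    (hσ : ∀ α t : ℝ, σ α t = ![f t * Real.cos (t + α), f t * Real.sin (t + α)])
    (A : Set (EuclideanSpace ℝ (Fin 2)))
    (hA : A = {x : EuclideanSpace ℝ (Fin 2) | lam1 < ‖x‖ ∧ ‖x‖ < lam2}) :
    (∀ α ∈ Set.Ico (0 : ℝ) (2 * π), ∀ β ∈ Set.Ico (0 : ℝ) (2 * π), α ≠ β →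
        Disjoint (Set.range (σ α)) (Set.range (σ β))) ∧
      (⋃ α ∈ Set.Ico (0 : ℝ) (2 * π), Set.range (σ α)) = A ∧
      ∀ p ∈ A, ∃! q : ℝ × ℝ, q.1 ∈ Set.Ico (0 : ℝ) (2 * π) ∧ σ q.1 q.2 = p := by
  subst hA
  have hmem : ∀ t, f t ∈ Set.Ioo lam1 lam2 := fun t => by
    rw [hf]
    exact profile_mem hlt t
  have hpos : ∀ t, 0 < f t := fun t => h1.trans (hmem t).1
  have hσ0 : ∀ α t, σ α t 0 = f t * Real.cos (t + α) := fun α t => by simp [hσ α t]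
  have hσ1 : ∀ α t, σ α t 1 = f t * Real.sin (t + α) := fun α t => by simp [hσ α t]
  have hnorm : ∀ α t, ‖σ α t‖ = f t := fun α t =>
    norm_eq_of_polar (hpos t).le (hσ0 α t) (hσ1 α t)
  have hinj : ∀ α ∈ Set.Ico (0 : ℝ) (2 * π), ∀ β ∈ Set.Ico (0 : ℝ) (2 * π), ∀ s t : ℝ,
      σ α s = σ β t → α = β ∧ s = t := by
    intro α hα β hβ s t h
    have hst : s = t := by
      have hfst : f s = f t := by rw [← hnorm α s, h, hnorm]
      rw [hf, hf] at hfst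
      exact profile_injective hlt hfst
    subst hst
    refine ⟨eq_of_cos_sin_eq (t := s) hα hβ ?_ ?_, rfl⟩
    · exact mul_left_cancel₀ (hpos s).ne' (by rw [← hσ0, ← hσ0, h])
    · exact mul_left_cancel₀ (hpos s).ne' (by rw [← hσ1, ← hσ1, h])
  have hex : ∀ p : EuclideanSpace ℝ (Fin 2), lam1 < ‖p‖ ∧ ‖p‖ < lam2 →
      ∃ α ∈ Set.Ico (0 : ℝ) (2 * π), ∃ t, σ α t = p := by
    intro p hp
    obtain ⟨t, ht⟩ := exists_profile_eq (r := ‖p‖) hp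
    rw [← hf] at ht
    obtain ⟨θ, hc, hs⟩ := exists_polar_s8 p
    -- `α` is the representative of `θ - t` modulo `2π` in `[0, 2π)`.
    have hα := toIcoMod_mem_Ico Real.two_pi_pos 0 (θ - t)
    rw [zero_add] at hα
    have hang : t + toIcoMod Real.two_pi_pos 0 (θ - t)
        = θ - toIcoDiv Real.two_pi_pos 0 (θ - t) * (2 * π) := by
      rw [toIcoMod, zsmul_eq_mul]
      ring
    refine ⟨_, hα, t, ?_⟩
    ext i
    fin_cases i
    · change σ _ t 0 = p 0
      rw [hσ0, hang, Real.cos_sub_int_mul_two_pi, ht, hc]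
    · change σ _ t 1 = p 1
      rw [hσ1, hang, Real.sin_sub_int_mul_two_pi, ht, hs]
  refine ⟨?_, ?_, ?_⟩
  · intro α hα β hβ hne
    rw [Set.disjoint_left]
    rintro _ ⟨s, rfl⟩ ⟨t, ht⟩
    exact hne (hinj β hβ α hα t s ht).1.symm
  · ext p
    simp only [Set.mem_iUnion, Set.mem_range, Set.mem_ofPred_eq, exists_prop]
    refine ⟨?_, hex p⟩
    rintro ⟨α, -, t, rfl⟩
    rw [hnorm]
    exact hmem t
  · intro p hp
    obtain ⟨α, hα, t, rfl⟩ := hex p hp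
    refine ⟨(α, t), ⟨hα, rfl⟩, ?_⟩
    rintro ⟨β, s⟩ ⟨hβ, h⟩
    obtain ⟨hβα, hst⟩ := hinj β hβ α hα s t h
    exact Prod.ext hβα hst
end
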